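/- Let $k$ be a field and let $n \ge 1$ and $m \ge 0$ be natural numbers. The ring $T := k[u_1, v_1, \dots, u_n, v_n, w_1, \dots, w_m]/(u_1 v_1 - u_2 v_2, \; u_1 v_1 - u_3 v_3, \; \dots, \; u_1 v_1 - u_n v_n)$ is an integral domain and is integrally closed in its field of fractions (i.e., $T$ is a normal domain). -/

import Mathlib

namespace ToricNormal

theorem normal_of_retract {T P : Type*} [CommRing T] [CommRing P] [IsDomain P]
    [IsIntegrallyClosed P] (φ : T →+* P) (ρ : P →+ T)
    (hρ : ∀ t p, ρ (φ t * p) = t * ρ p) (h1 : ρ 1 = 1) :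
    IsDomain T ∧ IsIntegrallyClosed T := by
  have hid : ∀ t, ρ (φ t) = t := fun t => by
    have := hρ t 1
    rwa [mul_one, h1, mul_one] at this
  have hinj : Function.Injective φ := fun x y h => by rw [← hid x, ← hid y, h]
  have hdom : IsDomain T := hinj.isDomain φ
  refine ⟨hdom, ?_⟩
  rw [isIntegrallyClosed_iff (FractionRing T)]
  intro x hx
  let ψ : FractionRing T →+* FractionRing P :=
    IsFractionRing.map (A := T) (B := P) (K := FractionRing T) (L := FractionRing P) hinj
  have hψ : ∀ t : T, ψ (algebraMap T _ t) = algebraMap P _ (φ t) := fun t =>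
    IsLocalization.map_eq _ t
  obtain ⟨f, g, hg, rfl⟩ := IsFractionRing.div_surjective (A := T) x
  have hint : IsIntegral P (ψ (algebraMap T (FractionRing T) f / algebraMap T (FractionRing T) g)) := by
    obtain ⟨p, hp, hp0⟩ := hx
    refine ⟨p.map φ, hp.map φ, ?_⟩
    rw [Polynomial.eval₂_map]
    have : (algebraMap P (FractionRing P)).comp φ = ψ.comp (algebraMap T (FractionRing T)) := by
      ext t; simp [hψ]
    rw [this, ← Polynomial.hom_eval₂, hp0, map_zero]
  obtain ⟨h, hh⟩ := (isIntegrallyClosed_iff (FractionRing P)).1 inferInstance hint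
  have hg0 : g ≠ 0 := nonZeroDivisors.ne_zero hg
  have hφg : φ g ≠ 0 := fun h => hg0 (hinj (by rw [h, map_zero]))
  have hφg' : algebraMap P (FractionRing P) (φ g) ≠ 0 := fun h =>
    hφg (IsFractionRing.injective P (FractionRing P) (by rw [h, map_zero]))
  rw [map_div₀, hψ, hψ, eq_div_iff hφg', ← map_mul] at hh
  have h2 := IsFractionRing.injective P (FractionRing P) hh
  have h3 : f = g * ρ h := by rw [← hρ, mul_comm, h2, hid]
  refine ⟨ρ h, ?_⟩
  have hg' : algebraMap T (FractionRing T) g ≠ 0 := fun h =>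
    hg0 (IsFractionRing.injective T (FractionRing T) (by rw [h, map_zero]))
  rw [eq_div_iff hg', ← map_mul, h3, mul_comm]

section mon
variable {n : ℕ} {T : Type*} [CommRing T] (u v : Fin n → T) (s : T)

def F (a : ℤ) (b : Fin n → ℤ) : T :=
  (∏ j, (u j ^ (b j).toNat * v j ^ (-b j).toNat)) * s ^ (a - ∑ j, ((-b j).toNat : ℤ)).toNat

theorem F_split (a : ℤ) (b : Fin n → ℤ) (i : Fin n) : F u v s a b =
    (u i ^ (b i).toNat * v i ^ (-b i).toNat) *
    (∏ j ∈ Finset.univ.erase i, (u j ^ (b j).toNat * v j ^ (-b j).toNat)) *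
     s ^ (a - (((-b i).toNat : ℤ) + ∑ j ∈ Finset.univ.erase i, ((-b j).toNat : ℤ))).toNat := by
  rw [F, ← Finset.mul_prod_erase _ _ (Finset.mem_univ i),
    ← Finset.add_sum_erase _ _ (Finset.mem_univ i)]

theorem F_u (hs : ∀ i, u i * v i = s) (a : ℤ) (b b' : Fin n → ℤ) (i : Fin n)
    (ha : ∑ j, ((-b j).toNat : ℤ) ≤ a) (hi : b' i = b i + 1) (hj : ∀ j, j ≠ i → b' j = b j) :
    F u v s a b' = u i * F u v s a b := by
  rw [← Finset.add_sum_erase _ _ (Finset.mem_univ i)] at ha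
  rw [F_split u v s a b i, F_split u v s a b' i,
    Finset.prod_congr rfl (fun j hjj => by rw [hj j (Finset.ne_of_mem_erase hjj)]),
    Finset.sum_congr rfl (fun j hjj => by rw [hj j (Finset.ne_of_mem_erase hjj)]), hi]
  generalize ∏ j ∈ Finset.univ.erase i, (u j ^ (b j).toNat * v j ^ (-b j).toNat) = R
  generalize ∑ j ∈ Finset.univ.erase i, ((-b j).toNat : ℤ) = c at *
  rcases le_or_gt 0 (b i) with h | h
  · have e1 : (b i + 1).toNat = (b i).toNat + 1 := by omega
    have e2 : (-(b i + 1)).toNat = 0 := by omega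
    have e3 : (-(b i)).toNat = 0 := by omega
    rw [e1, e2, e3]; ring
  · have e1 : (b i + 1).toNat = 0 := by omega
    have e2 : (-(b i)).toNat = (-(b i + 1)).toNat + 1 := by omega
    have e3 : (b i).toNat = 0 := by omega
    have e4 : (a - (((-(b i + 1)).toNat : ℤ) + c)).toNat
      = (a - (((-(b i)).toNat : ℤ) + c)).toNat + 1 := by omega
    rw [e4, e1, e2, e3, pow_succ s, ← hs i]; ring

theorem F_v (hs : ∀ i, u i * v i = s) (a : ℤ) (b b' : Fin n → ℤ) (i : Fin n)
    (ha : ∑ j, ((-b j).toNat : ℤ) ≤ a) (hi : b' i = b i - 1) (hj : ∀ j, j ≠ i → b' j = b j) :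
    F u v s (a + 1) b' = v i * F u v s a b := by
  rw [← Finset.add_sum_erase _ _ (Finset.mem_univ i)] at ha
  rw [F_split u v s a b i, F_split u v s (a + 1) b' i,
    Finset.prod_congr rfl (fun j hjj => by rw [hj j (Finset.ne_of_mem_erase hjj)]),
    Finset.sum_congr rfl (fun j hjj => by rw [hj j (Finset.ne_of_mem_erase hjj)]), hi]
  generalize ∏ j ∈ Finset.univ.erase i, (u j ^ (b j).toNat * v j ^ (-b j).toNat) = R
  generalize ∑ j ∈ Finset.univ.erase i, ((-b j).toNat : ℤ) = c at *
  rcases le_or_gt (b i) 0 with h | h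
  · have e1 : (b i - 1).toNat = 0 := by omega
    have e2 : (-(b i - 1)).toNat = (-(b i)).toNat + 1 := by omega
    have e3 : (b i).toNat = 0 := by omega
    have e4 : (a + 1 - (((-(b i - 1)).toNat : ℤ) + c)).toNat
      = (a - (((-(b i)).toNat : ℤ) + c)).toNat := by omega
    rw [e4, e1, e2, e3]; ring
  · have e1 : (b i).toNat = (b i - 1).toNat + 1 := by omega
    have e2 : (-(b i - 1)).toNat = 0 := by omega
    have e3 : (-(b i)).toNat = 0 := by omega
    have e4 : (a + 1 - (((0 : ℕ) : ℤ) + c)).toNat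
      = (a - (((0 : ℕ) : ℤ) + c)).toNat + 1 := by omega
    rw [e2, e3, e4, e1, pow_succ s, ← hs i]; ring

end mon

section exps
variable {n m : ℕ}

abbrev E (n m : ℕ) := (Finset (Fin n) ⊕ Fin m) →₀ ℕ

noncomputable def dU (i : Fin n) : E n m :=
  Finsupp.equivFunOnFinite.symm (Sum.elim (fun S => if i ∈ S then 1 else 0) 0)
noncomputable def dV (i : Fin n) : E n m :=
  Finsupp.equivFunOnFinite.symm (Sum.elim (fun S => if i ∈ S then 0 else 1) 0)
noncomputable def dW (j : Fin m) : E n m := Finsupp.single (Sum.inr j) 1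

theorem dU_inl (i : Fin n) (S) : (dU i : E n m) (Sum.inl S) = if i ∈ S then 1 else 0 := rfl
theorem dU_inr (i : Fin n) (j) : (dU i : E n m) (Sum.inr j) = 0 := rfl
theorem dV_inl (i : Fin n) (S) : (dV i : E n m) (Sum.inl S) = if i ∈ S then 0 else 1 := rfl
theorem dV_inr (i : Fin n) (j) : (dV i : E n m) (Sum.inr j) = 0 := rfl
theorem dW_inl (j : Fin m) (S) : (dW j : E n m) (Sum.inl S) = 0 := by simp [dW]
theorem dW_inr (j l : Fin m) : (dW j : E n m) (Sum.inr l) = if l = j then 1 else 0 := by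
  simp [dW, Finsupp.single_apply, eq_comm]

theorem dUV (i : Fin n) : (dU i + dV i : E n m) =
    Finsupp.equivFunOnFinite.symm (Sum.elim 1 0) := by
  ext (S | j)
  · rw [Finsupp.add_apply, dU_inl, dV_inl]
    by_cases h : i ∈ S <;> simp [h]
  · rw [Finsupp.add_apply, dU_inr, dV_inr]; simp

def eA (e : E n m) : ℤ := e (Sum.inl ∅)
def eB (e : E n m) (i : Fin n) : ℤ := (e (Sum.inl {i}) : ℤ) - e (Sum.inl ∅)
def Good (e : E n m) : Prop := ∀ S, (e (Sum.inl S) : ℤ) = eA e + ∑ i ∈ S, eB e i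

theorem eA_u (i : Fin n) (e : E n m) : eA (dU i + e) = eA e := by
  simp [eA, dU_inl]
theorem eA_v (i : Fin n) (e : E n m) : eA (dV i + e) = eA e + 1 := by
  simp [eA, dV_inl, add_comm]
theorem eB_u (i j : Fin n) (e : E n m) : eB (dU i + e) j = eB e j + if i = j then 1 else 0 := by
  by_cases h : i = j <;> simp [eB, dU_inl, h] <;> ring
theorem eB_v (i j : Fin n) (e : E n m) : eB (dV i + e) j = eB e j - if i = j then 1 else 0 := by
  by_cases h : i = j <;> simp [eB, dV_inl, h] ; ring
theorem eA_w (i : Fin m) (e : E n m) : eA (dW i + e) = eA e := by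
  simp [eA, dW_inl]
theorem eB_w (i : Fin m) (e : E n m) : eB (dW i + e) = eB e := by
  ext j; simp [eB, dW_inl]

theorem good_u (i : Fin n) (e : E n m) : Good (dU i + e) ↔ Good e := by
  refine forall_congr' fun S => ?_
  rw [eA_u, Finset.sum_congr rfl (fun j _ => eB_u i j e), Finset.sum_add_distrib,
    Finset.sum_ite_eq, Finsupp.add_apply, dU_inl]
  split_ifs <;> push_cast <;> constructor <;> intro h <;> linarith
theorem good_v (i : Fin n) (e : E n m) : Good (dV i + e) ↔ Good e := by
  refine forall_congr' fun S => ?_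
  rw [eA_v, Finset.sum_congr rfl (fun j _ => eB_v i j e), Finset.sum_sub_distrib,
    Finset.sum_ite_eq, Finsupp.add_apply, dV_inl]
  split_ifs <;> push_cast <;> constructor <;> intro h <;> linarith
theorem good_w (i : Fin m) (e : E n m) : Good (dW i + e) ↔ Good e := by
  refine forall_congr' fun S => ?_
  rw [eA_w, eB_w, Finsupp.add_apply, dW_inl, zero_add]

theorem good_le (e : E n m) (h : Good e) : ∑ j, ((-eB e j).toNat : ℤ) ≤ eA e := by
  have h1 := h (Finset.univ.filter fun j => eB e j < 0)
  have h2 : ∑ j, ((-eB e j).toNat : ℤ) = - ∑ j ∈ Finset.univ.filter (fun j => eB e j < 0), eB e j := by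
    rw [Finset.sum_filter, ← Finset.sum_neg_distrib]
    refine Finset.sum_congr rfl fun j _ => ?_
    split_ifs <;> omega
  rw [h2]; omega

variable {T : Type*} [CommRing T] (u v : Fin n → T) (s : T) (w : Fin m → T)

open Classical in
noncomputable def M (e : E n m) : T :=
  if Good e then F u v s (eA e) (eB e) * ∏ j, w j ^ e (Sum.inr j) else 0

theorem M_zero : M u v s w 0 = 1 := by
  have : Good (0 : E n m) := fun S => by simp [eA, eB]
  simp [M, this, F, eA, eB]

theorem M_u (hs : ∀ i, u i * v i = s) (i : Fin n) (e : E n m) :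
    M u v s w (dU i + e) = u i * M u v s w e := by
  unfold M
  by_cases h : Good e
  · rw [if_pos h, if_pos ((good_u i e).2 h), eA_u,
      F_u u v s hs (eA e) (eB e) _ i (good_le e h) (by simp [eB_u])
        (fun j hj => by simp [eB_u, hj.symm])]
    simp [dU_inr, mul_assoc]
  · rw [if_neg h, if_neg (mt (good_u i e).1 h), mul_zero]

theorem M_v (hs : ∀ i, u i * v i = s) (i : Fin n) (e : E n m) :
    M u v s w (dV i + e) = v i * M u v s w e := by
  unfold M
  by_cases h : Good e
  · rw [if_pos h, if_pos ((good_v i e).2 h), eA_v,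
      F_v u v s hs (eA e) (eB e) _ i (good_le e h) (by simp [eB_v])
        (fun j hj => by simp [eB_v, hj.symm])]
    simp [dV_inr, mul_assoc]
  · rw [if_neg h, if_neg (mt (good_v i e).1 h), mul_zero]

theorem M_w (i : Fin m) (e : E n m) :
    M u v s w (dW i + e) = w i * M u v s w e := by
  unfold M
  by_cases h : Good e
  · rw [if_pos h, if_pos ((good_w i e).2 h), eA_w, eB_w]
    have h1 : ∀ j, w j ^ (dW i + e : E n m) (Sum.inr j)
        = (if j = i then w j else 1) * w j ^ e (Sum.inr j) := fun j => by
      rw [Finsupp.add_apply, dW_inr, pow_add]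
      split_ifs <;> simp
    simp only [h1, Finset.prod_mul_distrib, Finset.prod_ite_eq', Finset.mem_univ, if_true]
    ring
  · rw [if_neg h, if_neg (mt (good_w i e).1 h), mul_zero]

end exps

noncomputable def d {n m : ℕ} : Fin n ⊕ Fin n ⊕ Fin m → E n m :=
  Sum.elim dU (Sum.elim dV dW)

end ToricNormal

open ToricNormal

/-- Let `k` be a field and `n ≥ 1`, `m ≥ 0`.  The ring
`T := k[u_1, v_1, …, u_n, v_n, w_1, …, w_m] / (u_1 v_1 - u_2 v_2, …, u_1 v_1 - u_n v_n)`
is an integral domain and is integrally closed in its field of fractions, i.e. `T` is a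
normal domain.  Variables are indexed by `Fin n ⊕ Fin n ⊕ Fin m`, with the `u`'s indexed
by the first summand, the `v`'s by the second and the `w`'s by the third.  (The relations
`u_1 v_1 - u_i v_i` are recorded for all `i`; for `i = 1` this contributes only the zero
element, so for `n = 1` the ideal is the zero ideal.) -/
theorem statement5 (k : Type*) [Field k] (n m : ℕ) (hn : 1 ≤ n) :
    letI σ := (Fin n ⊕ Fin n ⊕ Fin m)
    letI A := MvPolynomial σ k
    letI u : Fin n → A := fun i => MvPolynomial.X (Sum.inl i)
    letI v : Fin n → A := fun i => MvPolynomial.X (Sum.inr (Sum.inl i))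
    letI I : Ideal A := Ideal.span
      (Set.range fun i : Fin n => u ⟨0, hn⟩ * v ⟨0, hn⟩ - u i * v i)
    IsDomain (A ⧸ I) ∧ IsIntegrallyClosed (A ⧸ I) := by
  let u : Fin n → MvPolynomial (Fin n ⊕ Fin n ⊕ Fin m) k := fun i => MvPolynomial.X (Sum.inl i)
  let v : Fin n → MvPolynomial (Fin n ⊕ Fin n ⊕ Fin m) k := fun i => MvPolynomial.X (Sum.inr (Sum.inl i))
  let I : Ideal (MvPolynomial (Fin n ⊕ Fin n ⊕ Fin m) k) := Ideal.span
      (Set.range fun i : Fin n => u ⟨0, hn⟩ * v ⟨0, hn⟩ - u i * v i)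
  change IsDomain (MvPolynomial (Fin n ⊕ Fin n ⊕ Fin m) k ⧸ I) ∧ IsIntegrallyClosed (MvPolynomial (Fin n ⊕ Fin n ⊕ Fin m) k ⧸ I)
  have hI : ∀ i, Ideal.Quotient.mk I (u i) * Ideal.Quotient.mk I (v i)
      = Ideal.Quotient.mk I (u ⟨0, hn⟩ * v ⟨0, hn⟩) := fun i => by
    rw [← map_mul, eq_comm, Ideal.Quotient.eq]
    exact Ideal.subset_span ⟨i, rfl⟩
  let φ₀ : MvPolynomial (Fin n ⊕ Fin n ⊕ Fin m) k →ₐ[k] MvPolynomial (Finset (Fin n) ⊕ Fin m) k := MvPolynomial.aeval (fun x => MvPolynomial.monomial (d x) 1)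
  have hφ₀ : ∀ a ∈ I, φ₀ a = 0 := by
    intro a ha
    have : I ≤ RingHom.ker φ₀ := by
      rw [Ideal.span_le]
      rintro _ ⟨i, rfl⟩
      simp only [SetLike.mem_coe, RingHom.mem_ker, map_sub, map_mul, φ₀, u, v,
        MvPolynomial.aeval_X, MvPolynomial.monomial_mul, d, Sum.elim_inl, Sum.elim_inr, dUV, sub_self]
    exact this ha
  let φ : MvPolynomial (Fin n ⊕ Fin n ⊕ Fin m) k ⧸ I →+* MvPolynomial (Finset (Fin n) ⊕ Fin m) k := Ideal.Quotient.lift I φ₀.toRingHom hφ₀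
  let Mf : E n m → MvPolynomial (Fin n ⊕ Fin n ⊕ Fin m) k ⧸ I := M (fun i => Ideal.Quotient.mk I (u i))
    (fun i => Ideal.Quotient.mk I (v i)) (Ideal.Quotient.mk I (u ⟨0, hn⟩ * v ⟨0, hn⟩))
    (fun j => Ideal.Quotient.mk I (MvPolynomial.X (Sum.inr (Sum.inr j))))
  have hMf : ∀ x e, Mf (d x + e) = Ideal.Quotient.mk I (MvPolynomial.X x) * Mf e := by
    rintro (i | i | j) e
    · exact M_u _ _ _ _ hI i e
    · exact M_v _ _ _ _ hI i e
    · exact M_w _ _ _ _ j e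
  let ρ : MvPolynomial (Finset (Fin n) ⊕ Fin m) k →ₗ[k] MvPolynomial (Fin n ⊕ Fin n ⊕ Fin m) k ⧸ I := (MvPolynomial.basisMonomials _ k).constr k Mf
  have hρm : ∀ e, ρ (MvPolynomial.monomial e 1) = Mf e := fun e => by
    have := (MvPolynomial.basisMonomials (Finset (Fin n) ⊕ Fin m) k).constr_basis k Mf e
    rwa [MvPolynomial.coe_basisMonomials] at this
  have hX : ∀ x p, ρ (φ₀ (MvPolynomial.X x) * p) = Ideal.Quotient.mk I (MvPolynomial.X x) * ρ p := by
    intro x p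
    have : ρ ∘ₗ LinearMap.mulLeft k (φ₀ (MvPolynomial.X x))
        = LinearMap.mulLeft k (Ideal.Quotient.mk I (MvPolynomial.X x)) ∘ₗ ρ := by
      refine (MvPolynomial.basisMonomials _ k).ext fun e => ?_
      simp only [MvPolynomial.coe_basisMonomials, LinearMap.comp_apply, LinearMap.mulLeft_apply,
        hρm, ← hMf]
      rw [← hρm, MvPolynomial.aeval_X, MvPolynomial.monomial_mul, one_mul]
    exact LinearMap.congr_fun this p
  have hA : ∀ (f : MvPolynomial (Fin n ⊕ Fin n ⊕ Fin m) k) p, ρ (φ₀ f * p) = Ideal.Quotient.mk I f * ρ p := by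
    intro f
    induction f using MvPolynomial.induction_on with
    | C c =>
      intro p
      have h1 : φ₀ (MvPolynomial.C c) * p = c • p := by
        rw [MvPolynomial.aeval_C, Algebra.smul_def]
      have h2 : Ideal.Quotient.mk I (MvPolynomial.C c) * ρ p = c • ρ p := by
        rw [Algebra.smul_def (A := MvPolynomial (Fin n ⊕ Fin n ⊕ Fin m) k ⧸ I)]; rfl
      rw [h1, h2, map_smul]
    | add f g hf hg => intro p; rw [map_add, add_mul, map_add, hf, hg, map_add, add_mul]
    | mul_X f x hf => intro p; rw [map_mul φ₀, mul_assoc, hf, hX, map_mul, mul_assoc]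
  refine normal_of_retract φ ρ.toAddMonoidHom ?_ ?_
  · intro t p
    obtain ⟨f, rfl⟩ := Ideal.Quotient.mk_surjective t
    exact hA f p
  · have : (1 : MvPolynomial (Finset (Fin n) ⊕ Fin m) k) = MvPolynomial.monomial 0 1 := rfl
    rw [this]
    exact (hρm 0).trans (M_zero _ _ _ _)
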